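/- Let K be a complete non-archimedean normed field whose norm is nontrivial (there exists y ∈ K with 0 < ‖y‖ < 1), and let a : (Fin n →₀ ℕ) → K tend to 0 along the cofinite filter. Let R^n = {x ∈ K^n : ‖x_j‖ ≤ 1 for all j} be the closed unit polydisc, and define F : R^n → K by F(x) = ∑'_i a(i)·x^i, where x^i = ∏_j x_j^{i(j)}. If there exist c ∈ R^n and r > 0 such that F(x) = 0 for every x ∈ R^n with ‖x − c‖ < r, then a(i) = 0 for all multi-indices i. -/

import Mathlib

/-!
The zeros of `F` are counted one variable at a time, as for polynomials on a product of infinite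
sets. In one variable this is Strassmann's argument: let `N` be the last index at which `‖b k‖` is
maximal. If `F c = 0` with `‖c‖ ≤ 1`, then `F x = (x - c) • G x`, where the coefficients
`∑' p, c ^ p • b (m + 1 + p)` of `G` have `N - 1` as the last index of maximal norm; hence `F` has
at most `N` zeros in the closed unit disc. In several variables, fixing all variables but the first
gives a strictly convergent series in one variable whose coefficients are strictly convergent series
in the remaining ones.
-/

open Filter Topology

section NullFamilies

variable {ι E : Type*} [SeminormedAddCommGroup E] {f : ι → E}

theorem finite_setOf_le_norm_of_tendsto_cofinite_zero (hf : Tendsto f cofinite (𝓝 0)) {ε : ℝ}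
    (hε : 0 < ε) : {i | ε ≤ ‖f i‖}.Finite := by
  simpa [eventually_cofinite] using hf.norm.eventually_lt_const (norm_zero.trans_lt hε)

theorem exists_forall_norm_le_of_tendsto_cofinite_zero [Nonempty ι]
    (hf : Tendsto f cofinite (𝓝 0)) : ∃ i, ∀ j, ‖f j‖ ≤ ‖f i‖ := by
  by_cases hzero : ∀ j, ‖f j‖ ≤ 0
  · exact ⟨Classical.arbitrary ι, fun j => (hzero j).trans (norm_nonneg _)⟩
  push Not at hzero
  obtain ⟨i₀, hi₀⟩ := hzero
  obtain ⟨i, hi, hmax⟩ := Set.exists_max_image _ (fun j => ‖f j‖)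
    (finite_setOf_le_norm_of_tendsto_cofinite_zero hf hi₀) ⟨i₀, le_refl ‖f i₀‖⟩
  exact ⟨i, fun j => (le_total ‖f i₀‖ ‖f j‖).elim (hmax j) fun hj => hj.trans hi⟩

theorem norm_tsum_lt_of_tendsto_cofinite_zero [Nonempty ι] [IsUltrametricDist E]
    (hf : Tendsto f cofinite (𝓝 0)) {C : ℝ} (hC : ∀ i, ‖f i‖ < C) : ‖∑' i, f i‖ < C := by
  obtain ⟨i, hi⟩ := exists_forall_norm_le_of_tendsto_cofinite_zero hf
  exact (IsUltrametricDist.norm_tsum_le_of_forall_le hi).trans_lt (hC i)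

variable {K : Type*} [NormedField K] [NormedSpace K E]

theorem norm_smul_le_of_norm_le_one {u : K} (hu : ‖u‖ ≤ 1) (v : E) : ‖u • v‖ ≤ ‖v‖ := by
  rw [norm_smul]
  exact mul_le_of_le_one_left (norm_nonneg v) hu

theorem tendsto_smul_cofinite_zero {u : ι → K} (hf : Tendsto f cofinite (𝓝 0))
    (hu : ∀ i, ‖u i‖ ≤ 1) : Tendsto (fun i => u i • f i) cofinite (𝓝 0) :=
  squeeze_zero_norm (fun i => norm_smul_le_of_norm_le_one (hu i) (f i))
    (tendsto_zero_iff_norm_tendsto_zero.1 hf)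

theorem summable_smul_of_tendsto_cofinite_zero [IsUltrametricDist E] [CompleteSpace E]
    {u : ι → K} (hf : Tendsto f cofinite (𝓝 0)) (hu : ∀ i, ‖u i‖ ≤ 1) :
    Summable fun i => u i • f i :=
  NonarchimedeanAddGroup.summable_of_tendsto_cofinite_zero (tendsto_smul_cofinite_zero hf hu)

end NullFamilies

theorem norm_pow_le_one_of_norm_le_one {K : Type*} [NormedField K] {x : K} (hx : ‖x‖ ≤ 1)
    (k : ℕ) : ‖x ^ k‖ ≤ 1 := by
  rw [norm_pow]
  exact pow_le_one₀ (norm_nonneg x) hx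

theorem tendsto_add_cofinite {A : Type*} [AddMonoid A] [Finset.HasAntidiagonal A] :
    Tendsto (fun p : A × A => p.1 + p.2) cofinite cofinite :=
  Tendsto.cofinite_of_finite_preimage_singleton fun k =>
    (Finset.HasAntidiagonal.antidiagonal k).finite_toSet.subset fun p hp => by simpa using hp

/-- The Strassmann index of a sequence: the last index at which its norm is maximal. The strict
inequality forces `b N ≠ 0`, so the zero sequence has no Strassmann index. -/
structure IsStrassmannIndex {E : Type*} [Norm E] (b : ℕ → E) (N : ℕ) : Prop where
  norm_le : ∀ k, ‖b k‖ ≤ ‖b N‖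
  norm_lt : ∀ k, N < k → ‖b k‖ < ‖b N‖

/-- `tailEval b c m` is the value at `c` of the series `b` with its first `m` terms dropped and the
rest divided by `x ^ m`. It serves to divide a series by `x - c`: the quotient has `m`-th
coefficient `tailEval b c (m + 1)`, and `tailEval b c 0` is the remainder. -/
noncomputable def tailEval {K E : Type*} [Monoid K] [AddCommMonoid E] [TopologicalSpace E]
    [SMul K E] (b : ℕ → E) (c : K) (m : ℕ) : E :=
  ∑' p, c ^ p • b (m + p)

section OneVariable

theorem IsStrassmannIndex.exists_of_tendsto {E : Type*} [NormedAddCommGroup E] {b : ℕ → E}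
    (hb : Tendsto b cofinite (𝓝 0)) (hb0 : b ≠ 0) : ∃ N, IsStrassmannIndex b N := by
  obtain ⟨i, hi⟩ := exists_forall_norm_le_of_tendsto_cofinite_zero hb
  obtain ⟨k, hk⟩ := Function.ne_iff.1 hb0
  have hpos : 0 < ‖b i‖ := (norm_pos_iff.2 hk).trans_le (hi k)
  obtain ⟨N, hN, hlast⟩ := Set.exists_max_image _ id
    (finite_setOf_le_norm_of_tendsto_cofinite_zero hb hpos) ⟨i, le_refl ‖b i‖⟩
  refine ⟨N, fun k => (hi k).trans hN, fun k hNk => ?_⟩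
  by_contra! hle
  exact hNk.not_ge (hlast k (hN.trans hle))

variable {K E : Type*} [NormedField K] [NormedAddCommGroup E] [NormedSpace K E]
  [IsUltrametricDist E] {b : ℕ → E} {c : K} {N : ℕ}

theorem norm_tailEval_le (hc : ‖c‖ ≤ 1) {C : ℝ} (hC : ∀ k, ‖b k‖ ≤ C) (m : ℕ) :
    ‖tailEval b c m‖ ≤ C :=
  IsUltrametricDist.norm_tsum_le_of_forall_le fun p =>
    (norm_smul_le_of_norm_le_one (norm_pow_le_one_of_norm_le_one hc p) _).trans (hC _)

theorem norm_tailEval_lt (hb : Tendsto b cofinite (𝓝 0)) (hc : ‖c‖ ≤ 1) {C : ℝ} {m : ℕ}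
    (hC : ∀ k, m ≤ k → ‖b k‖ < C) : ‖tailEval b c m‖ < C :=
  norm_tsum_lt_of_tendsto_cofinite_zero
    (tendsto_smul_cofinite_zero (hb.comp (add_right_injective m).tendsto_cofinite)
      (norm_pow_le_one_of_norm_le_one hc))
    fun p => (norm_smul_le_of_norm_le_one (norm_pow_le_one_of_norm_le_one hc p) _).trans_lt
      (hC _ (Nat.le_add_right m p))

variable [CompleteSpace E]

theorem tailEval_eq_add (hb : Tendsto b cofinite (𝓝 0)) (hc : ‖c‖ ≤ 1) (m : ℕ) :
    tailEval b c m = b m + c • tailEval b c (m + 1) := by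
  have hs : Summable fun p => c ^ p • b (m + p) :=
    summable_smul_of_tendsto_cofinite_zero (hb.comp (add_right_injective m).tendsto_cofinite)
      (norm_pow_le_one_of_norm_le_one hc)
  rw [tailEval, hs.tsum_eq_zero_add, tailEval, ← tsum_const_smul'']
  simp [pow_succ', mul_smul, add_assoc, add_comm 1]

theorem tendsto_tailEval (hb : Tendsto b cofinite (𝓝 0)) (hc : ‖c‖ ≤ 1) :
    Tendsto (tailEval b c) cofinite (𝓝 0) :=
  (summable_smul_of_tendsto_cofinite_zero (u := fun p : ℕ × ℕ => c ^ p.2)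
    (hb.comp tendsto_add_cofinite)
    fun p => norm_pow_le_one_of_norm_le_one hc p.2).prod.tendsto_cofinite_zero

theorem IsStrassmannIndex.norm_tailEval (hN : IsStrassmannIndex b N)
    (hb : Tendsto b cofinite (𝓝 0)) (hc : ‖c‖ ≤ 1) : ‖tailEval b c N‖ = ‖b N‖ := by
  have hlt : ‖c • tailEval b c (N + 1)‖ < ‖b N‖ :=
    (norm_smul_le_of_norm_le_one hc _).trans_lt (norm_tailEval_lt hb hc hN.norm_lt)
  rw [tailEval_eq_add hb hc, IsUltrametricDist.norm_add_eq_max_of_norm_ne_norm hlt.ne',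
    max_eq_left hlt.le]

theorem IsStrassmannIndex.tailEval_succ (hN : IsStrassmannIndex b (N + 1))
    (hb : Tendsto b cofinite (𝓝 0)) (hc : ‖c‖ ≤ 1) :
    IsStrassmannIndex (fun m => tailEval b c (m + 1)) N where
  norm_le m := (norm_tailEval_le hc hN.norm_le _).trans_eq (hN.norm_tailEval hb hc).symm
  norm_lt m hm := (norm_tailEval_lt hb hc fun k hk => hN.norm_lt k (by lia)).trans_eq
    (hN.norm_tailEval hb hc).symm

theorem tsum_pow_smul_eq_add_sub_smul (hb : Tendsto b cofinite (𝓝 0)) (hc : ‖c‖ ≤ 1) {x : K}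
    (hx : ‖x‖ ≤ 1) :
    ∑' k, x ^ k • b k =
      ∑' k, c ^ k • b k + (x - c) • ∑' m, x ^ m • tailEval b c (m + 1) := by
  have hT := tendsto_tailEval hb hc
  have hsT : Summable fun m => x ^ m • tailEval b c m :=
    summable_smul_of_tendsto_cofinite_zero hT (norm_pow_le_one_of_norm_le_one hx)
  have hsT' : Summable fun m => x ^ m • tailEval b c (m + 1) :=
    summable_smul_of_tendsto_cofinite_zero (hT.comp (add_left_injective 1).tendsto_cofinite)
      (norm_pow_le_one_of_norm_le_one hx)
  set Q := ∑' m, x ^ m • tailEval b c (m + 1) with hQ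
  have hcoeff (m : ℕ) : b m = tailEval b c m - c • tailEval b c (m + 1) :=
    eq_sub_of_add_eq (tailEval_eq_add hb hc m).symm
  have hshift : ∑' m, x ^ m • tailEval b c m = tailEval b c 0 + x • Q := by
    rw [hsT.tsum_eq_zero_add, hQ, ← tsum_const_smul'']
    simp [pow_succ', mul_smul]
  calc ∑' k, x ^ k • b k
      = ∑' m, (x ^ m • tailEval b c m - c • x ^ m • tailEval b c (m + 1)) :=
        tsum_congr fun m => by rw [hcoeff m, smul_sub, smul_comm]
    _ = ∑' m, x ^ m • tailEval b c m - c • Q := by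
        rw [hsT.tsum_sub (hsT'.const_smul c), tsum_const_smul'']
    _ = tailEval b c 0 + (x - c) • Q := by rw [hshift, sub_smul, add_sub_assoc]
    _ = ∑' k, c ^ k • b k + (x - c) • Q := by simp only [tailEval, zero_add]

theorem IsStrassmannIndex.encard_zeros_le (hN : IsStrassmannIndex b N)
    (hb : Tendsto b cofinite (𝓝 0)) :
    {x : K | ‖x‖ ≤ 1 ∧ ∑' k, x ^ k • b k = 0}.encard ≤ N := by
  induction N generalizing b with
  | zero =>
    refine (Set.encard_eq_zero.2 <| Set.eq_empty_of_forall_notMem ?_).le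
    rintro c ⟨hc, hFc⟩
    have hb0 : ‖b 0‖ = 0 := by simpa [tailEval, hFc] using (hN.norm_tailEval hb hc).symm
    exact (norm_nonneg (b 1)).not_gt (hb0 ▸ hN.norm_lt 1 one_pos)
  | succ N ih =>
    rcases Set.eq_empty_or_nonempty {x : K | ‖x‖ ≤ 1 ∧ ∑' k, x ^ k • b k = 0} with
      hempty | ⟨c, hc, hFc⟩
    · simp [hempty]
    have hquot := ih (hN.tailEval_succ hb hc)
      ((tendsto_tailEval hb hc).comp (add_left_injective 1).tendsto_cofinite)
    refine (Set.encard_le_encard ?_).trans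
      ((Set.encard_insert_le _ c).trans (add_le_add_left hquot 1))
    rintro x ⟨hx, hFx⟩
    rw [tsum_pow_smul_eq_add_sub_smul hb hc hx, hFc, zero_add] at hFx
    exact (smul_eq_zero.1 hFx).imp sub_eq_zero.1 fun hQ => ⟨hx, hQ⟩

theorem eq_zero_of_infinite_zeros (hb : Tendsto b cofinite (𝓝 0)) {S : Set K} (hS : S.Infinite)
    (hS1 : ∀ x ∈ S, ‖x‖ ≤ 1) (hzero : ∀ x ∈ S, ∑' k, x ^ k • b k = 0) : b = 0 := by
  by_contra hb0
  obtain ⟨N, hN⟩ := IsStrassmannIndex.exists_of_tendsto hb hb0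
  refine hS ((Set.finite_of_encard_le_coe (hN.encard_zeros_le hb)).subset ?_)
  exact fun x hx => ⟨hS1 x hx, hzero x hx⟩

end OneVariable

section SeveralVariables

/-- Splitting a multi-index in `n + 1` variables into its first exponent and the remaining
multi-index, used to view a series in `n + 1` variables as one in the first variable. -/
noncomputable def consMultiIndexEquiv (n : ℕ) : ℕ × (Fin n →₀ ℕ) ≃ (Fin (n + 1) →₀ ℕ) where
  toFun p := p.2.cons p.1
  invFun i := (i 0, i.tail)
  left_inv p := by simp
  right_inv i := by simp

variable {K : Type*} [NormedField K] {n : ℕ}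

theorem norm_prod_pow_le_one {σ : Type*} [Fintype σ] {y : σ → K} (hy : ∀ j, ‖y j‖ ≤ 1)
    (i : σ → ℕ) : ‖∏ j, y j ^ i j‖ ≤ 1 := by
  rw [norm_prod]
  exact Finset.prod_le_one (fun _ _ => norm_nonneg _) fun j _ =>
    norm_pow_le_one_of_norm_le_one (hy j) (i j)

variable {E : Type*} [NormedAddCommGroup E] [NormedSpace K E] [IsUltrametricDist E]
  [CompleteSpace E]

theorem tendsto_tsum_smul_cons {a : (Fin (n + 1) →₀ ℕ) → E} (ha : Tendsto a cofinite (𝓝 0))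
    {y : Fin n → K} (hy : ∀ j, ‖y j‖ ≤ 1) :
    Tendsto (fun k => ∑' i : Fin n →₀ ℕ, (∏ j, y j ^ i j) • a (i.cons k)) cofinite (𝓝 0) :=
  (summable_smul_of_tendsto_cofinite_zero (u := fun p : ℕ × (Fin n →₀ ℕ) => ∏ j, y j ^ p.2 j)
    (ha.comp (consMultiIndexEquiv n).injective.tendsto_cofinite)
    fun p => norm_prod_pow_le_one hy p.2).prod.tendsto_cofinite_zero

theorem tsum_smul_cons {a : (Fin (n + 1) →₀ ℕ) → E} (ha : Tendsto a cofinite (𝓝 0))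
    {x : K} (hx : ‖x‖ ≤ 1) {y : Fin n → K} (hy : ∀ j, ‖y j‖ ≤ 1) :
    ∑' i : Fin (n + 1) →₀ ℕ, (∏ j, (Fin.cons x y : Fin (n + 1) → K) j ^ i j) • a i =
      ∑' k, x ^ k • ∑' i : Fin n →₀ ℕ, (∏ j, y j ^ i j) • a (i.cons k) := by
  have hxy : ∀ j, ‖(Fin.cons x y : Fin (n + 1) → K) j‖ ≤ 1 := Fin.cases hx hy
  have hs := (consMultiIndexEquiv n).summable_iff.2
    (summable_smul_of_tendsto_cofinite_zero ha fun i => norm_prod_pow_le_one hxy i)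
  rw [← (consMultiIndexEquiv n).tsum_eq]
  refine hs.tsum_prod.trans (tsum_congr fun k => ?_)
  rw [← tsum_const_smul'']
  exact tsum_congr fun i => by simp [consMultiIndexEquiv, Fin.prod_univ_succ, mul_smul]

theorem strictly_convergent_eq_zero_of_locally_zero_general {a : (Fin n →₀ ℕ) → E}
    (ha : Tendsto a cofinite (𝓝 0)) {S : Fin n → Set K} (hS : ∀ j, (S j).Infinite)
    (hS1 : ∀ j, ∀ x ∈ S j, ‖x‖ ≤ 1)
    (hzero : ∀ x ∈ Set.univ.pi S, ∑' i : Fin n →₀ ℕ, (∏ j, x j ^ i j) • a i = 0)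
    (i : Fin n →₀ ℕ) :
    a i = 0 := by
  induction n with
  | zero => simpa [Subsingleton.elim i default] using hzero finZeroElim (by simp)
  | succ n ih =>
    rw [← i.cons_tail]
    refine ih (a := fun i' => a (i'.cons (i 0)))
      (ha.comp (Finsupp.cons_right_injective (i 0)).tendsto_cofinite)
      (fun j => hS j.succ) (fun j => hS1 j.succ) (fun y hy => ?_) i.tail
    have hy1 (j : Fin n) : ‖y j‖ ≤ 1 := hS1 j.succ (y j) (hy j trivial)
    refine congrFun (eq_zero_of_infinite_zeros (tendsto_tsum_smul_cons ha hy1) (hS 0) (hS1 0)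
      fun x hx => ?_) (i 0)
    rw [← tsum_smul_cons ha (hS1 0 x hx) hy1]
    exact hzero _ fun j _ => Fin.cases hx (fun j => hy j trivial) j

end SeveralVariables

theorem infinite_closedBall_inter_ball {K : Type*} [NormedField K] [IsUltrametricDist K]
    (hK : ∃ y : K, 0 < ‖y‖ ∧ ‖y‖ < 1) {c : K} {R : ℝ} (hc : ‖c‖ ≤ R) (hR : R ≠ 0) {r : ℝ}
    (hr : 0 < r) : (Metric.closedBall 0 R ∩ Metric.ball c r).Infinite := by
  obtain ⟨y, hy0, hy1⟩ := hK
  let _ := NontriviallyNormedField.ofNormNeOne ⟨y, norm_pos_iff.1 hy0, hy1.ne⟩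
  exact infinite_of_mem_nhds c <| Filter.inter_mem
    ((IsUltrametricDist.isOpen_closedBall 0 hR).mem_nhds (mem_closedBall_zero_iff.2 hc))
    (Metric.ball_mem_nhds c hr)

/-- Let `K` be a complete non-archimedean normed field with nontrivial norm and `a` the
coefficient family of a strictly convergent power series in `n` variables.  If the function
`F(x) = ∑' i, a i · x^i` vanishes on some open ball (intersected with the closed unit
polydisc `R^n`) around a point `c` of `R^n`, then all coefficients `a i` vanish. -/
theorem strictly_convergent_eq_zero_of_locally_zero {K : Type*} [NormedField K]
    [CompleteSpace K]
    (hna : ∀ u v : K, ‖u + v‖ ≤ max ‖u‖ ‖v‖)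
    (hnontriv : ∃ y : K, 0 < ‖y‖ ∧ ‖y‖ < 1)
    {n : ℕ} (a : (Fin n →₀ ℕ) → K)
    (ha : Filter.Tendsto a Filter.cofinite (nhds 0))
    (c : Fin n → K) (hc : ∀ j, ‖c j‖ ≤ 1) (r : ℝ) (hr : 0 < r)
    (hzero : ∀ x : Fin n → K, (∀ j, ‖x j‖ ≤ 1) → ‖x - c‖ < r →
      (∑' i : Fin n →₀ ℕ, a i * ∏ j, x j ^ i j) = 0) :
    ∀ i, a i = 0 := by
  have : IsUltrametricDist K :=
    IsUltrametricDist.isUltrametricDist_of_forall_norm_add_le_max_norm hna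
  refine strictly_convergent_eq_zero_of_locally_zero_general ha
    (S := fun j => Metric.closedBall 0 1 ∩ Metric.ball (c j) r)
    (fun j => infinite_closedBall_inter_ball hnontriv (hc j) one_ne_zero hr)
    (fun j x hx => mem_closedBall_zero_iff.1 hx.1) fun x hx => ?_
  simpa only [smul_eq_mul, mul_comm] using hzero x
    (fun j => mem_closedBall_zero_iff.1 (hx j trivial).1)
    ((pi_norm_lt_iff hr).2 fun j => mem_ball_iff_norm.1 (hx j trivial).2)
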